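/- (Conformal invariance under Kelvin inversion.) Let n ≥ 3, μ > 0, let ι : ℝⁿ \ {0} → ℝⁿ \ {0} be the inversion ι(x) = μ² x / |x|², let Ω ⊆ ℝⁿ \ {0} be open, let K : ℝⁿ \ {0} → ℝ, and let u be a positive twice continuously differentiable function on ι(Ω) satisfying −c_n Δu = K u^((n+2)/(n−2)) on ι(Ω), where c_n = 4(n−1)/(n−2). Then the Kelvin transform ǔ(x) = (μ^(n−2)/|x|^(n−2)) u(ι(x)) satisfies −c_n Δǔ = (K ∘ ι) ǔ^((n+2)/(n−2)) on Ω. -/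

import Mathlib

/-- The Euclidean Laplacian: the sum of the second partial derivatives. -/
noncomputable def lap {n : ℕ} (u : EuclideanSpace ℝ (Fin n) → ℝ)
    (x : EuclideanSpace ℝ (Fin n)) : ℝ :=
  ∑ i : Fin n, fderiv ℝ (fun y => fderiv ℝ u y (EuclideanSpace.single i 1)) x
    (EuclideanSpace.single i 1)

section Kelvin

variable {E : Type*} [NormedAddCommGroup E] [InnerProductSpace ℝ E]

lemma hasFDerivAt_const_div_norm_rpow (c p : ℝ) {x : E} (hx : x ≠ 0) :
    HasFDerivAt (fun z : E => c / ‖z‖ ^ p)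
      ((-p * (c / ‖x‖ ^ p) / ‖x‖ ^ 2) • innerSL ℝ x) x := by
  have hx' : 0 < ‖x‖ := norm_pos_iff.2 hx
  have h := (((hasStrictFDerivAt_norm_sq x).hasFDerivAt).rpow_const (p := -(p / 2))
    (Or.inl (by positivity))).const_mul c
  refine (h.congr_fderiv ?_).congr_of_eventuallyEq (.of_forall fun z => ?_)
  · ext y
    have : (‖x‖ ^ 2) ^ (-(p / 2) - 1) = (‖x‖ ^ p)⁻¹ / ‖x‖ ^ 2 := by
      rw [Real.rpow_sub_one (by positivity), ← Real.rpow_natCast, ← Real.rpow_mul hx'.le,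
        ← Real.rpow_neg hx'.le]
      congr 2
      push_cast
      ring
    simp [this]
    ring
  · simp only [div_eq_mul_inv]
    rw [← Real.rpow_natCast, ← Real.rpow_mul (norm_nonneg z), ← Real.rpow_neg (norm_nonneg z)]
    congr 2
    push_cast
    ring

lemma hasFDerivAt_const_div_norm_sq (c : ℝ) {x : E} (hx : x ≠ 0) :
    HasFDerivAt (fun z : E => c / ‖z‖ ^ 2) ((-2 * c / ‖x‖ ^ 4) • innerSL ℝ x) x := by
  have h := hasFDerivAt_const_div_norm_rpow c 2 hx
  simp only [Real.rpow_two] at h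
  refine h.congr_fderiv ?_
  congr 1
  field_simp

lemma hasFDerivAt_kelvinInversion (c : ℝ) {x : E} (hx : x ≠ 0) :
    HasFDerivAt (fun z : E => (c / ‖z‖ ^ 2) • z)
      ((c / ‖x‖ ^ 2) • ContinuousLinearMap.id ℝ E +
        ((-2 * c / ‖x‖ ^ 4) • innerSL ℝ x).smulRight x) x :=
  (hasFDerivAt_const_div_norm_sq c hx).smul (hasFDerivAt_id x)

lemma fderiv_kelvinTransform_apply (a c p : ℝ) {u : E → ℝ} {x : E} (hx : x ≠ 0)
    (hu : DifferentiableAt ℝ u ((c / ‖x‖ ^ 2) • x)) (e : E) :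
    fderiv ℝ (fun z => a / ‖z‖ ^ p * u ((c / ‖z‖ ^ 2) • z)) x e =
      a / ‖x‖ ^ p * (-p / ‖x‖ ^ 2 * inner ℝ e x * u ((c / ‖x‖ ^ 2) • x) +
        fderiv ℝ u ((c / ‖x‖ ^ 2) • x)
          ((c / ‖x‖ ^ 2) • e + (-2 * c / ‖x‖ ^ 4 * inner ℝ e x) • x)) := by
  have h := (hasFDerivAt_const_div_norm_rpow a p hx).mul
    (hu.hasFDerivAt.comp (f := fun z : E => (c / ‖z‖ ^ 2) • z) x
      (hasFDerivAt_kelvinInversion c hx))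
  refine (congrArg (fun T : E →L[ℝ] ℝ => T e) h.fderiv).trans ?_
  simp [real_inner_comm]
  ring

/-- The second derivative of the Kelvin transform in a unit direction `e`. -/
lemma fderiv_fderiv_kelvinTransform_apply (a c p : ℝ) {u : E → ℝ} {x : E} (hx : x ≠ 0)
    (hu : ContDiffAt ℝ 2 u ((c / ‖x‖ ^ 2) • x)) {e : E} (he : ‖e‖ = 1)
    {A : E →L[ℝ] ℝ} {B : E →L[ℝ] E →L[ℝ] ℝ}
    (hA : A = fderiv ℝ u ((c / ‖x‖ ^ 2) • x))
    (hB : B = fderiv ℝ (fderiv ℝ u) ((c / ‖x‖ ^ 2) • x)) :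
    fderiv ℝ (fun y => fderiv ℝ (fun z => a / ‖z‖ ^ p * u ((c / ‖z‖ ^ 2) • z)) y e) x e =
      a / ‖x‖ ^ p * (
        (c / ‖x‖ ^ 2) ^ 2 * B e e
        - 2 * c ^ 2 / ‖x‖ ^ 6 * (inner ℝ e x * B e x)
        - 2 * c ^ 2 / ‖x‖ ^ 6 * (inner ℝ e x * B x e)
        + 4 * c ^ 2 / ‖x‖ ^ 8 * B x x * inner ℝ e x ^ 2
        + (-2 * p - 4) * c / ‖x‖ ^ 4 * (inner ℝ e x * A e)
        + (4 * p + 8) * c / ‖x‖ ^ 6 * A x * inner ℝ e x ^ 2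
        - 2 * c / ‖x‖ ^ 4 * A x
        + p * (p + 2) / ‖x‖ ^ 4 * u ((c / ‖x‖ ^ 2) • x) * inner ℝ e x ^ 2
        - p / ‖x‖ ^ 2 * u ((c / ‖x‖ ^ 2) • x)) := by
  have hx' : 0 < ‖x‖ := norm_pos_iff.2 hx
  have hι := hasFDerivAt_kelvinInversion c hx
  have hfirst : (fun y => fderiv ℝ (fun z => a / ‖z‖ ^ p * u ((c / ‖z‖ ^ 2) • z)) y e) =ᶠ[nhds x]
      fun y => a / ‖y‖ ^ p * (-p / ‖y‖ ^ 2 * inner ℝ e y * u ((c / ‖y‖ ^ 2) • y) +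
        fderiv ℝ u ((c / ‖y‖ ^ 2) • y)
          ((c / ‖y‖ ^ 2) • e + (-2 * c / ‖y‖ ^ 4 * inner ℝ e y) • y)) := by
    have hev := hι.continuousAt.eventually (hu.eventually (by simp))
    filter_upwards [hev, isOpen_ne.mem_nhds hx] with y hy hy0
    exact fderiv_kelvinTransform_apply a c p hy0 (hy.differentiableAt (by norm_num)) e
  rw [hfirst.fderiv_eq]
  have hinner : HasFDerivAt (fun y : E => inner ℝ e y) (innerSL ℝ e) x :=
    (innerSL ℝ e).hasFDerivAt
  have hw := hasFDerivAt_const_div_norm_rpow a p hx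
  have hdu : DifferentiableAt ℝ (fderiv ℝ u) ((c / ‖x‖ ^ 2) • x) :=
    (hu.fderiv_right (m := 1) (by norm_num)).differentiableAt (by norm_num)
  have hU : HasFDerivAt (fun y => u ((c / ‖y‖ ^ 2) • y)) (A.comp _) x :=
    (hA ▸ (hu.differentiableAt (by norm_num)).hasFDerivAt :
      HasFDerivAt u A ((c / ‖x‖ ^ 2) • x)).comp (f := fun z : E => (c / ‖z‖ ^ 2) • z) x hι
  have hDU : HasFDerivAt (fun y => fderiv ℝ u ((c / ‖y‖ ^ 2) • y)) (B.comp _) x :=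
    (hB ▸ hdu.hasFDerivAt : HasFDerivAt (fderiv ℝ u) B ((c / ‖x‖ ^ 2) • x)).comp
      (f := fun z : E => (c / ‖z‖ ^ 2) • z) x hι
  have h4 : HasFDerivAt (fun y : E => -2 * c / ‖y‖ ^ 4)
      ((-4 * (-2 * c) / ‖x‖ ^ 6) • innerSL ℝ x) x := by
    have h := hasFDerivAt_const_div_norm_rpow (-2 * c) (4 : ℕ) hx
    simp only [Real.rpow_natCast] at h
    refine h.congr_fderiv ?_
    congr 1
    push_cast
    field_simp
  have hv := ((hasFDerivAt_const_div_norm_sq c hx).smul_const e).add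
    ((h4.mul hinner).smul (hasFDerivAt_id x))
  have h := hw.mul ((((hasFDerivAt_const_div_norm_sq (-p) hx).mul hinner).mul hU).add
    (hDU.clm_apply hv))
  refine (congrArg (fun T : E →L[ℝ] ℝ => T e) h.fderiv).trans ?_
  simp [real_inner_comm, he, ← hA]
  field_simp
  ring

end Kelvin

lemma lap_eq_sum {n : ℕ} {u : EuclideanSpace ℝ (Fin n) → ℝ} {y : EuclideanSpace ℝ (Fin n)}
    (hu : ContDiffAt ℝ 2 u y) :
    lap u y = ∑ i : Fin n, fderiv ℝ (fderiv ℝ u) y (EuclideanSpace.single i 1)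
      (EuclideanSpace.single i 1) := by
  have hdu : DifferentiableAt ℝ (fderiv ℝ u) y :=
    (hu.fderiv_right (m := 1) (by norm_num)).differentiableAt (by norm_num)
  refine Finset.sum_congr rfl fun i _ => ?_
  rw [fderiv_clm_apply hdu (differentiableAt_const _)]
  simp

lemma lap_kelvinTransform {n : ℕ} (a c : ℝ) {u : EuclideanSpace ℝ (Fin n) → ℝ}
    {x : EuclideanSpace ℝ (Fin n)} (hx : x ≠ 0) (hu : ContDiffAt ℝ 2 u ((c / ‖x‖ ^ 2) • x)) :
    lap (fun z => a / ‖z‖ ^ ((n : ℝ) - 2) * u ((c / ‖z‖ ^ 2) • z)) x =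
      a / ‖x‖ ^ ((n : ℝ) - 2) * (c / ‖x‖ ^ 2) ^ 2 * lap u ((c / ‖x‖ ^ 2) • x) := by
  have hx' : 0 < ‖x‖ := norm_pos_iff.2 hx
  rw [lap_eq_sum hu]
  obtain ⟨A, hA⟩ : ∃ A, A = fderiv ℝ u ((c / ‖x‖ ^ 2) • x) := ⟨_, rfl⟩
  obtain ⟨B, hB⟩ : ∃ B, B = fderiv ℝ (fderiv ℝ u) ((c / ‖x‖ ^ 2) • x) := ⟨_, rfl⟩
  have hterm (i : Fin n) := fderiv_fderiv_kelvinTransform_apply a c ((n : ℝ) - 2) hx hu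
    (e := EuclideanSpace.single i 1) (by simp) hA hB
  rw [lap, Finset.sum_congr rfl fun i _ => hterm i, ← hB]
  have hsum : ∑ i, inner ℝ (EuclideanSpace.single i (1 : ℝ)) x • EuclideanSpace.single i (1 : ℝ)
      = x := by
    simpa using (EuclideanSpace.basisFun (Fin n) ℝ).sum_repr' x
  have hsq : ∑ i, inner ℝ (EuclideanSpace.single i (1 : ℝ)) x ^ 2 = ‖x‖ ^ 2 := by
    simp [EuclideanSpace.real_norm_sq_eq, EuclideanSpace.inner_single_left]
  have hsumA : ∑ i, inner ℝ (EuclideanSpace.single i (1 : ℝ)) x * A (EuclideanSpace.single i 1)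
      = A x := by
    simpa only [map_sum, map_smul, smul_eq_mul] using congrArg A hsum
  have hsumB₁ : ∑ i, inner ℝ (EuclideanSpace.single i (1 : ℝ)) x *
      B (EuclideanSpace.single i 1) x = B x x := by
    simpa only [map_sum, map_smul, smul_eq_mul, ContinuousLinearMap.flip_apply] using
      congrArg (B.flip x) hsum
  have hsumB₂ : ∑ i, inner ℝ (EuclideanSpace.single i (1 : ℝ)) x *
      B x (EuclideanSpace.single i 1) = B x x := by
    simpa only [map_sum, map_smul, smul_eq_mul] using congrArg (B x) hsum
  simp only [← Finset.mul_sum, Finset.sum_add_distrib, Finset.sum_sub_distrib, hsq, hsumA, hsumB₁,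
    hsumB₂, Finset.sum_const, Finset.card_univ, Fintype.card_fin, nsmul_eq_mul]
  field_simp
  ring

lemma kelvinInversion_involutive {E : Type*} [NormedAddCommGroup E] [NormedSpace ℝ E] {mu : ℝ}
    (hmu : mu ≠ 0) : Function.Involutive fun x : E => (mu ^ 2 / ‖x‖ ^ 2) • x := by
  intro x
  rcases eq_or_ne x 0 with rfl | hx
  · simp
  · have hx' : ‖x‖ ≠ 0 := norm_ne_zero_iff.2 hx
    simp only [norm_smul, smul_smul, norm_div, norm_pow, Real.norm_eq_abs, sq_abs]
    rw [show mu ^ 2 / (mu ^ 2 / ‖x‖ ^ 2 * ‖x‖) ^ 2 * (mu ^ 2 / ‖x‖ ^ 2) = 1 by field_simp,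
      one_smul]

lemma isOpen_image_kelvinInversion {E : Type*} [NormedAddCommGroup E] [InnerProductSpace ℝ E]
    {mu : ℝ} (hmu : mu ≠ 0) {Ω : Set E} (hΩ : IsOpen Ω) (hΩ0 : (0 : E) ∉ Ω) :
    IsOpen ((fun x : E => (mu ^ 2 / ‖x‖ ^ 2) • x) '' Ω) := by
  rw [(kelvinInversion_involutive hmu).image_eq_preimage_symm, isOpen_iff_mem_nhds]
  intro y hy
  have hy0 : y ≠ 0 := by
    rintro rfl
    exact hΩ0 (by simpa using hy)
  exact (hasFDerivAt_kelvinInversion (mu ^ 2) hy0).continuousAt (hΩ.mem_nhds hy)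

/-- Conformal invariance of the prescribed scalar curvature equation under Kelvin
inversion `ι(x) = μ² x/|x|²`: if `u` solves `-c_n Δu = K u^((n+2)/(n-2))` on `ι(Ω)`, then
the Kelvin transform `ǔ(x) = (μ^(n-2)/|x|^(n-2)) u(ι(x))` solves
`-c_n Δǔ = (K ∘ ι) ǔ^((n+2)/(n-2))` on `Ω`. -/
theorem stmt_11 (n : ℕ) (hn : 3 ≤ n) (mu : ℝ) (hmu : 0 < mu)
    (Ω : Set (EuclideanSpace ℝ (Fin n))) (hΩ : IsOpen Ω)
    (hΩ0 : (0 : EuclideanSpace ℝ (Fin n)) ∉ Ω)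
    (K u : EuclideanSpace ℝ (Fin n) → ℝ)
    (hu : ContDiffOn ℝ 2 u ((fun x : EuclideanSpace ℝ (Fin n) => (mu ^ 2 / ‖x‖ ^ 2) • x) '' Ω))
    (hupos : ∀ y ∈ (fun x : EuclideanSpace ℝ (Fin n) => (mu ^ 2 / ‖x‖ ^ 2) • x) '' Ω, 0 < u y)
    (hpde : ∀ y ∈ (fun x : EuclideanSpace ℝ (Fin n) => (mu ^ 2 / ‖x‖ ^ 2) • x) '' Ω,
      -((4 * ((n : ℝ) - 1)) / ((n : ℝ) - 2)) * lap u y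
        = K y * u y ^ (((n : ℝ) + 2) / ((n : ℝ) - 2))) :
    ∀ x ∈ Ω,
      -((4 * ((n : ℝ) - 1)) / ((n : ℝ) - 2)) *
          lap (fun z => mu ^ ((n : ℝ) - 2) / ‖z‖ ^ ((n : ℝ) - 2)
            * u ((mu ^ 2 / ‖z‖ ^ 2) • z)) x
        = K ((mu ^ 2 / ‖x‖ ^ 2) • x) *
            (mu ^ ((n : ℝ) - 2) / ‖x‖ ^ ((n : ℝ) - 2) * u ((mu ^ 2 / ‖x‖ ^ 2) • x))
              ^ (((n : ℝ) + 2) / ((n : ℝ) - 2)) := by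
  intro x hx
  have hx0 : x ≠ 0 := fun h => hΩ0 (h ▸ hx)
  have hx' : 0 < ‖x‖ := norm_pos_iff.2 hx0
  have hn2 : (n : ℝ) - 2 ≠ 0 := by
    have : (3 : ℝ) ≤ n := by exact_mod_cast hn
    linarith
  have hmem := Set.mem_image_of_mem (fun x : EuclideanSpace ℝ (Fin n) => (mu ^ 2 / ‖x‖ ^ 2) • x) hx
  have hu' := hu.contDiffAt ((isOpen_image_kelvinInversion hmu.ne' hΩ hΩ0).mem_nhds hmem)
  have hq : 0 < mu / ‖x‖ := by positivity
  have hpow : (mu ^ ((n : ℝ) - 2) / ‖x‖ ^ ((n : ℝ) - 2)) ^ (((n : ℝ) + 2) / ((n : ℝ) - 2)) =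
      mu ^ ((n : ℝ) - 2) / ‖x‖ ^ ((n : ℝ) - 2) * (mu ^ 2 / ‖x‖ ^ 2) ^ 2 := by
    rw [← Real.div_rpow hmu.le hx'.le, ← Real.rpow_mul hq.le, mul_div_cancel₀ _ hn2, ← div_pow,
      ← pow_mul, ← Real.rpow_natCast, ← Real.rpow_add hq]
    congr 1
    push_cast
    ring
  rw [lap_kelvinTransform _ _ hx0 hu', Real.mul_rpow (by positivity) (hupos _ hmem).le, hpow]
  linear_combination (mu ^ ((n : ℝ) - 2) / ‖x‖ ^ ((n : ℝ) - 2) * (mu ^ 2 / ‖x‖ ^ 2) ^ 2) *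
    hpde _ hmem
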